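/- Let Ω ⊆ ℝ³ be open, let c₀ : ℝ³ → ℝ be differentiable and strictly positive on Ω, and let u_L : ℝ³ → ℂ³ and w_L : ℝ³ → ℂ be differentiable on Ω. Define u_c := c₀ u_L and w_c := w_L/c₀. Then, with background data ρ₀, φ₀, frequency ω, attenuation γ and source f as in the stellar oscillation equations, (u_L, w_L) satisfies the Liouville system [(−ω² − 2iωγ) u_L + ((α_ρ − ∇φ₀/c₀²)·u_L) ∇φ₀ + (∇φ₀/c₀² − α_ρ/2) w_L + ∇w_L = 0 and w_L/c₀² + u_L·(−∇φ₀/c₀² + α_ρ/2) + div u_L = √ρ₀ f] at every point of Ω if and only if (u_c, w_c) satisfies the Liouville-c system [((−ω² − 2iωγ)/c₀²) u_c + (1/c₀²)((α_ρ − ∇φ₀/c₀²)·u_c) ∇φ₀ + (∇φ₀/c₀² − α_ρ/2 − α_c) w_c + ∇w_c = 0 and w_c + u_c·(−∇φ₀/c₀² + α_ρ/2 + α_c) + div u_c = c₀ √ρ₀ f] at every point of Ω, where α_ρ = −∇ρ₀/ρ₀ and α_c = −∇c₀/c₀. -/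

import Mathlib

/-- Gradient of a complex-valued function on ℝ³: vector of partial derivatives. -/
noncomputable def grad (g : (Fin 3 → ℝ) → ℂ) (x : Fin 3 → ℝ) : Fin 3 → ℂ :=
  fun i => fderiv ℝ g x (Pi.single i 1)

/-- Gradient of a real-valued function on ℝ³: vector of partial derivatives. -/
noncomputable def gradR (g : (Fin 3 → ℝ) → ℝ) (x : Fin 3 → ℝ) : Fin 3 → ℝ :=
  fun i => fderiv ℝ g x (Pi.single i 1)

/-- Divergence of a ℂ³-valued field on ℝ³: sum of the partial derivatives of its components. -/
noncomputable def divC (u : (Fin 3 → ℝ) → Fin 3 → ℂ) (x : Fin 3 → ℝ) : ℂ :=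
  ∑ i, fderiv ℝ (fun y => u y i) x (Pi.single i 1)

/-- Inverse scale-height vector `α_g = -∇g/g` of a positive scalar background function. -/
noncomputable def alphaOf (g : (Fin 3 → ℝ) → ℝ) (x : Fin 3 → ℝ) : Fin 3 → ℝ :=
  fun i => -(gradR g x i) / g x

/-!
Multiplying a field by `c` shifts its logarithmic derivatives by those of `c`, that is by `-α_c`,
and dividing by `c` shifts them by `α_c`, because `α_{1/c} = -α_c`. The `α_c` terms of the
Liouville-c system cancel exactly these shifts: under `u ↦ c u`, `w ↦ w / c`, the left-hand side of
its first equation is `1 / c` times, and that of its second equation `c` times, the corresponding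
left-hand side of the Liouville system.
-/

theorem alphaOf_inv {c : (Fin 3 → ℝ) → ℝ} {x : Fin 3 → ℝ}
    (hc : DifferentiableAt ℝ c x) (hcx : c x ≠ 0) :
    alphaOf (fun y => (c y)⁻¹) x = -alphaOf c x := by
  have hinv : fderiv ℝ (fun y => (c y)⁻¹) x = -(c x ^ 2)⁻¹ • fderiv ℝ c x :=
    ((hasDerivAt_inv hcx).comp_hasFDerivAt x hc.hasFDerivAt).fderiv
  ext i
  simp only [alphaOf, gradR, hinv, FunLike.coe_smul, Pi.smul_apply, Pi.neg_apply, smul_eq_mul]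
  field_simp

theorem grad_ofReal_mul {c : (Fin 3 → ℝ) → ℝ} {g : (Fin 3 → ℝ) → ℂ} {x : Fin 3 → ℝ}
    (hc : DifferentiableAt ℝ c x) (hcx : c x ≠ 0) (hg : DifferentiableAt ℝ g x) (i : Fin 3) :
    grad (fun y => (c y : ℂ) * g y) x i = c x * (grad g x i - alphaOf c x i * g x) := by
  have hcx' : (c x : ℂ) ≠ 0 := Complex.ofReal_ne_zero.mpr hcx
  have product_rule : grad (fun y => (c y : ℂ) * g y) x i
      = c x * grad g x i + gradR c x i * g x := by
    simp only [grad, gradR, ← Complex.real_smul, fderiv_fun_smul hc hg]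
    rfl
  rw [product_rule, alphaOf]
  push_cast
  field_simp
  ring

theorem grad_div_ofReal {c : (Fin 3 → ℝ) → ℝ} {g : (Fin 3 → ℝ) → ℂ} {x : Fin 3 → ℝ}
    (hc : DifferentiableAt ℝ c x) (hcx : c x ≠ 0) (hg : DifferentiableAt ℝ g x) (i : Fin 3) :
    grad (fun y => g y / (c y : ℂ)) x i = (grad g x i + alphaOf c x i * g x) / c x := by
  have div_eq : (fun y => g y / (c y : ℂ)) = fun y => ((c y)⁻¹ : ℝ) * g y := by
    funext y
    rw [Complex.ofReal_inv, div_eq_inv_mul]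
  rw [div_eq, grad_ofReal_mul (hc.fun_inv hcx) (inv_ne_zero hcx) hg, alphaOf_inv hc hcx]
  simp [div_eq_inv_mul]

theorem divC_ofReal_mul {c : (Fin 3 → ℝ) → ℝ} {u : (Fin 3 → ℝ) → Fin 3 → ℂ} {x : Fin 3 → ℝ}
    (hc : DifferentiableAt ℝ c x) (hcx : c x ≠ 0) (hu : DifferentiableAt ℝ u x) :
    divC (fun y i => (c y : ℂ) * u y i) x
      = c x * (divC u x - ∑ j, alphaOf c x j * u x j) := calc
  divC (fun y i => (c y : ℂ) * u y i) x
      = ∑ j, c x * (grad (fun y => u y j) x j - alphaOf c x j * u x j) :=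
        Finset.sum_congr rfl fun j _ => grad_ofReal_mul hc hcx (differentiableAt_pi.mp hu j) j
  _ = c x * (divC u x - ∑ j, alphaOf c x j * u x j) := by
        rw [← Finset.mul_sum, Finset.sum_sub_distrib]
        rfl

/-- Left-hand side of the first Liouville equation at `x`, with arbitrary `σ`, `a`, `g` in place of
`-ω² - 2iωγ`, `α_ρ(x)` and `∇φ₀(x)`. -/
noncomputable def liouvilleMomentum (σ : ℂ) (a g : Fin 3 → ℝ) (c : (Fin 3 → ℝ) → ℝ)
    (u : (Fin 3 → ℝ) → Fin 3 → ℂ) (w : (Fin 3 → ℝ) → ℂ) (x : Fin 3 → ℝ) : Fin 3 → ℂ := fun i =>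
  σ * u x i + (∑ j, ((a j - g j / c x ^ 2 : ℝ) : ℂ) * u x j) * g i
    + ((g i / c x ^ 2 - a i / 2 : ℝ) : ℂ) * w x + grad w x i

/-- Left-hand side of the second Liouville equation at `x`, with arbitrary `a`, `g` in place of
`α_ρ(x)` and `∇φ₀(x)`. -/
noncomputable def liouvilleContinuity (a g : Fin 3 → ℝ) (c : (Fin 3 → ℝ) → ℝ)
    (u : (Fin 3 → ℝ) → Fin 3 → ℂ) (w : (Fin 3 → ℝ) → ℂ) (x : Fin 3 → ℝ) : ℂ :=
  w x / (c x : ℂ) ^ 2 + (∑ j, ((-g j / c x ^ 2 + a j / 2 : ℝ) : ℂ) * u x j) + divC u x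

/-- Left-hand side of the first Liouville-c equation at `x`, with the parameters of
`liouvilleMomentum`. -/
noncomputable def liouvilleCMomentum (σ : ℂ) (a g : Fin 3 → ℝ) (c : (Fin 3 → ℝ) → ℝ)
    (u : (Fin 3 → ℝ) → Fin 3 → ℂ) (w : (Fin 3 → ℝ) → ℂ) (x : Fin 3 → ℝ) : Fin 3 → ℂ := fun i =>
  σ / (c x : ℂ) ^ 2 * u x i
    + 1 / (c x : ℂ) ^ 2 * (∑ j, ((a j - g j / c x ^ 2 : ℝ) : ℂ) * u x j) * g i
    + ((g i / c x ^ 2 - a i / 2 - alphaOf c x i : ℝ) : ℂ) * w x + grad w x i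

/-- Left-hand side of the second Liouville-c equation at `x`, with the parameters of
`liouvilleContinuity`. -/
noncomputable def liouvilleCContinuity (a g : Fin 3 → ℝ) (c : (Fin 3 → ℝ) → ℝ)
    (u : (Fin 3 → ℝ) → Fin 3 → ℂ) (w : (Fin 3 → ℝ) → ℂ) (x : Fin 3 → ℝ) : ℂ :=
  w x + (∑ j, ((-g j / c x ^ 2 + a j / 2 + alphaOf c x j : ℝ) : ℂ) * u x j) + divC u x

section ChangeOfUnknowns

variable (a g : Fin 3 → ℝ) {c : (Fin 3 → ℝ) → ℝ} {u : (Fin 3 → ℝ) → Fin 3 → ℂ}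
  {w : (Fin 3 → ℝ) → ℂ} {x : Fin 3 → ℝ}

theorem liouvilleCMomentum_mul_div (σ : ℂ) (hc : DifferentiableAt ℝ c x) (hcx : c x ≠ 0)
    (hw : DifferentiableAt ℝ w x) (i : Fin 3) :
    liouvilleCMomentum σ a g c (fun y i => c y * u y i) (fun y => w y / c y) x i
      = liouvilleMomentum σ a g c u w x i / c x := by
  have hcx' : (c x : ℂ) ≠ 0 := Complex.ofReal_ne_zero.mpr hcx
  simp only [liouvilleCMomentum, liouvilleMomentum, grad_div_ofReal hc hcx hw,
    mul_left_comm _ (c x : ℂ), ← Finset.mul_sum, Complex.ofReal_sub _ (alphaOf c x i)]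
  generalize ∑ j, ((a j - g j / c x ^ 2 : ℝ) : ℂ) * u x j = uTerm
  generalize ((g i / c x ^ 2 - a i / 2 : ℝ) : ℂ) = wCoeff
  field_simp
  ring

theorem liouvilleCContinuity_mul_div (hc : DifferentiableAt ℝ c x) (hcx : c x ≠ 0)
    (hu : DifferentiableAt ℝ u x) :
    liouvilleCContinuity a g c (fun y i => c y * u y i) (fun y => w y / c y) x
      = c x * liouvilleContinuity a g c u w x := by
  have hcx' : (c x : ℂ) ≠ 0 := Complex.ofReal_ne_zero.mpr hcx
  simp only [liouvilleCContinuity, liouvilleContinuity, divC_ofReal_mul hc hcx hu,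
    mul_left_comm _ (c x : ℂ), ← Finset.mul_sum, Complex.ofReal_add _ (alphaOf c x _), add_mul,
    Finset.sum_add_distrib]
  generalize ∑ j, ((-g j / c x ^ 2 + a j / 2 : ℝ) : ℂ) * u x j = uTerm
  field_simp
  ring

theorem stmt7_general (σ s : ℂ) (hc : DifferentiableAt ℝ c x) (hcx : c x ≠ 0)
    (hu : DifferentiableAt ℝ u x) (hw : DifferentiableAt ℝ w x) :
    ((∀ i, liouvilleMomentum σ a g c u w x i = 0) ∧ liouvilleContinuity a g c u w x = s) ↔
      (∀ i, liouvilleCMomentum σ a g c (fun y i => c y * u y i) (fun y => w y / c y) x i = 0) ∧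
        liouvilleCContinuity a g c (fun y i => c y * u y i) (fun y => w y / c y) x
          = c x * s := by
  have hcx' : (c x : ℂ) ≠ 0 := Complex.ofReal_ne_zero.mpr hcx
  simp only [liouvilleCMomentum_mul_div a g σ hc hcx hw, liouvilleCContinuity_mul_div a g hc hcx hu,
    div_eq_zero_iff, hcx', or_false, mul_right_inj' hcx']

end ChangeOfUnknowns

theorem stmt7 (Ω : Set (Fin 3 → ℝ)) (hΩ : IsOpen Ω)
    (ρ₀ c₀ φ₀ : (Fin 3 → ℝ) → ℝ)
    (hρdiff : Differentiable ℝ ρ₀) (hρpos : ∀ x, 0 < ρ₀ x)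
    (hcdiff : ∀ x ∈ Ω, DifferentiableAt ℝ c₀ x) (hcpos : ∀ x ∈ Ω, 0 < c₀ x)
    (hφ : Differentiable ℝ φ₀)
    (ω γ : ℝ) (hω : 0 < ω) (hγ : 0 ≤ γ)
    (f : (Fin 3 → ℝ) → ℂ)
    (uL : (Fin 3 → ℝ) → Fin 3 → ℂ) (wL : (Fin 3 → ℝ) → ℂ)
    (huL : ∀ x ∈ Ω, DifferentiableAt ℝ uL x)
    (hwL : ∀ x ∈ Ω, DifferentiableAt ℝ wL x)
    (uc : (Fin 3 → ℝ) → Fin 3 → ℂ) (wc : (Fin 3 → ℝ) → ℂ)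
    (huc : uc = fun y => fun i => (c₀ y : ℂ) * uL y i)
    (hwc : wc = fun y => wL y / (c₀ y : ℂ)) :
    -- Liouville system
    (∀ x ∈ Ω,
      (∀ i, (-(ω : ℂ) ^ 2 - 2 * Complex.I * ω * γ) * uL x i
        + (∑ j, ((alphaOf ρ₀ x j - gradR φ₀ x j / (c₀ x) ^ 2 : ℝ) : ℂ) * uL x j)
            * (gradR φ₀ x i : ℂ)
        + ((gradR φ₀ x i / (c₀ x) ^ 2 - alphaOf ρ₀ x i / 2 : ℝ) : ℂ) * wL x
        + grad wL x i = 0)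
      ∧ wL x / ((c₀ x) ^ 2 : ℂ)
          + (∑ j, ((-(gradR φ₀ x j) / (c₀ x) ^ 2 + alphaOf ρ₀ x j / 2 : ℝ) : ℂ) * uL x j)
          + divC uL x = (Real.sqrt (ρ₀ x) : ℂ) * f x)
    ↔
    -- Liouville-c system
    (∀ x ∈ Ω,
      (∀ i, ((-(ω : ℂ) ^ 2 - 2 * Complex.I * ω * γ) / ((c₀ x) ^ 2 : ℂ)) * uc x i
        + (1 / ((c₀ x) ^ 2 : ℂ))
            * (∑ j, ((alphaOf ρ₀ x j - gradR φ₀ x j / (c₀ x) ^ 2 : ℝ) : ℂ) * uc x j)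
            * (gradR φ₀ x i : ℂ)
        + ((gradR φ₀ x i / (c₀ x) ^ 2 - alphaOf ρ₀ x i / 2 - alphaOf c₀ x i : ℝ) : ℂ) * wc x
        + grad wc x i = 0)
      ∧ wc x
          + (∑ j, ((-(gradR φ₀ x j) / (c₀ x) ^ 2 + alphaOf ρ₀ x j / 2
                      + alphaOf c₀ x j : ℝ) : ℂ) * uc x j)
          + divC uc x = ((c₀ x * Real.sqrt (ρ₀ x) : ℝ) : ℂ) * f x) := by
  subst huc hwc
  refine forall₂_congr fun x hx => ?_
  rw [Complex.ofReal_mul (c₀ x), mul_assoc (c₀ x : ℂ) (√(ρ₀ x) : ℂ)]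
  exact stmt7_general (alphaOf ρ₀ x) (gradR φ₀ x) _ _ (hcdiff x hx) (hcpos x hx).ne'
    (huL x hx) (hwL x hx)
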